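/- Fix (a,b) ∈ ℝ². Then there exist constants C > 0 and ν₀ > 0 such that for all 0 < ν < ν₀, | v( x_c + v_c·b·(κν)^{1/2} + a·(κν³)^{1/4}, t_c + b·(κν)^{1/2}; ν ) − v_c − (ν/κ)^{1/4}·U(a,b) | ≤ C·ν^{1/2}, where U is the Pearcey-type function. In other words, near the gradient catastrophe the Cole–Hopf solution of the Burgers equation admits the expansion v(x,t,ν) = v_c + (ν/κ)^{1/4}·U( (x̄ − v_c·t̄)/(κν³)^{1/4}, t̄/(κν)^{1/2} ) + O(ν^{1/2}) with x̄ = x − x_c, t̄ = t − t_c. -/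

import Mathlib

noncomputable section

open MeasureTheory

/-- The Pearcey integral `I(a,b) = ∫ exp(-(z⁴ - 2bz² + 4az)/8) dz`. -/
def pearceyI (a b : ℝ) : ℝ :=
  ∫ z : ℝ, Real.exp (-(z ^ 4 - 2 * b * z ^ 2 + 4 * a * z) / 8)

/-- The Pearcey-type function `U(a,b) = -2 ∂_a log I(a,b)`. -/
def pearceyU (a b : ℝ) : ℝ :=
  -2 * deriv (fun a' : ℝ => Real.log (pearceyI a' b)) a


lemma bp_exp_diff (x y m : ℝ) (hx : m ≤ x) (hy : m ≤ y) :
    |Real.exp (-x) - Real.exp (-y)| ≤ |x - y| * Real.exp (-m) := by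
  wlog h : x ≤ y generalizing x y
  · have := this y x hy hx (le_of_not_ge h)
    rwa [abs_sub_comm, abs_sub_comm x y]
  have h1 : Real.exp (-y) ≤ Real.exp (-x) := Real.exp_le_exp.2 (by linarith)
  rw [abs_of_nonneg (by linarith), abs_of_nonpos (by linarith)]
  have h2 : Real.exp (-y) = Real.exp (-x) * Real.exp (x - y) := by
    rw [← Real.exp_add]; congr 1; ring
  have h3 := Real.add_one_le_exp (x - y)
  have h4 : Real.exp (-x) ≤ Real.exp (-m) := Real.exp_le_exp.2 (by linarith)
  have h5 := Real.exp_pos (-x)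
  calc Real.exp (-x) - Real.exp (-y) = Real.exp (-x) * (1 - Real.exp (x-y)) := by rw [h2]; ring
    _ ≤ Real.exp (-x) * (y - x) := by apply mul_le_mul_of_nonneg_left _ h5.le; linarith
    _ ≤ Real.exp (-m) * (y - x) := mul_le_mul_of_nonneg_right h4 (by linarith)
    _ = _ := by ring

lemma bp_int_pow (n : ℕ) (D : ℝ) :
    Integrable (fun z : ℝ => |z| ^ n * Real.exp (-(z ^ 2 - D))) := by
  have h := (integrable_rpow_mul_exp_neg_mul_sq (b := 1) one_pos (s := (n:ℝ))
    (by have : (0:ℝ) ≤ n := Nat.cast_nonneg n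
        linarith)).norm.const_mul (Real.exp D)
  refine h.congr (Filter.Eventually.of_forall fun z => ?_)
  simp only [norm_mul, Real.norm_eq_abs, Real.rpow_natCast, abs_pow, Real.abs_exp]
  rw [show -(z^2 - D) = D + -1 * z^2 by ring, Real.exp_add]; ring

lemma bp_integrable (f : ℝ → ℝ) (hf : Continuous f) (D : ℝ) (h : ∀ z, z ^ 2 - D ≤ f z) (n : ℕ) :
    Integrable (fun z : ℝ => z ^ n * Real.exp (-f z)) := by
  refine (bp_int_pow n D).mono' (by fun_prop) (Filter.Eventually.of_forall fun z => ?_)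
  rw [norm_mul, Real.norm_eq_abs, Real.norm_eq_abs, abs_pow, Real.abs_exp]
  gcongr
  exact h z

lemma bp_diff (f g : ℝ → ℝ) (hf : Continuous f) (hg : Continuous g) (D K : ℝ)
    (hf' : ∀ z, z ^ 2 - D ≤ f z) (hg' : ∀ z, z ^ 2 - D ≤ g z)
    (hfg : ∀ z, |f z - g z| ≤ K * (1 + |z| ^ 5)) (n : ℕ) :
    |(∫ z : ℝ, z ^ n * Real.exp (-f z)) - ∫ z : ℝ, z ^ n * Real.exp (-g z)| ≤
      K * ∫ z : ℝ, (|z| ^ n + |z| ^ (n + 5)) * Real.exp (-(z ^ 2 - D)) := by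
  rw [← integral_sub (bp_integrable f hf D hf' n) (bp_integrable g hg D hg' n),
    ← integral_const_mul, ← Real.norm_eq_abs]
  apply norm_integral_le_of_norm_le
  · have := ((bp_int_pow n D).add (bp_int_pow (n+5) D)).const_mul K
    refine this.congr (Filter.Eventually.of_forall fun z => ?_)
    simp only [Pi.add_apply]; ring
  · refine Filter.Eventually.of_forall fun z => ?_
    rw [← mul_sub, norm_mul, Real.norm_eq_abs, Real.norm_eq_abs, abs_pow]
    calc |z| ^ n * |Real.exp (-f z) - Real.exp (-g z)|
        ≤ |z| ^ n * (|f z - g z| * Real.exp (-(z^2 - D))) := by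
          gcongr; exact bp_exp_diff _ _ _ (hf' z) (hg' z)
      _ ≤ |z| ^ n * ((K * (1 + |z| ^ 5)) * Real.exp (-(z^2 - D))) := by
          gcongr; exact hfg z
      _ = _ := by ring

lemma bp_int_pos (f : ℝ → ℝ) (hf : Continuous f) (D : ℝ) (h : ∀ z, z ^ 2 - D ≤ f z) :
    0 < ∫ z : ℝ, Real.exp (-f z) := by
  have := bp_integrable f hf D h 0
  simp only [pow_zero, one_mul] at this
  exact integral_exp_pos this

/-- ratio lemma -/
lemma bp_ratio (F : ℝ → ℝ → ℝ) (g : ℝ → ℝ) (hg : Continuous g) (D K ε₀ : ℝ) (hε₀ : 0 < ε₀)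
    (hK : 0 ≤ K)
    (hg' : ∀ z, z ^ 2 - D ≤ g z)
    (hF : ∀ ε, 0 < ε → ε < ε₀ → Continuous (F ε))
    (hF' : ∀ ε, 0 < ε → ε < ε₀ → ∀ z, z ^ 2 - D ≤ F ε z)
    (hFg : ∀ ε, 0 < ε → ε < ε₀ → ∀ z, |F ε z - g z| ≤ (K * ε) * (1 + |z| ^ 5)) :
    ∃ C ≥ (0:ℝ), ∃ ε₁ > (0:ℝ), ∀ ε, 0 < ε → ε < ε₁ →
      |(∫ z : ℝ, z * Real.exp (-F ε z)) / (∫ z : ℝ, Real.exp (-F ε z)) -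
        (∫ z : ℝ, z * Real.exp (-g z)) / (∫ z : ℝ, Real.exp (-g z))| ≤ C * ε := by
  have H0 := fun ε h1 h2 => bp_diff (F ε) g (hF ε h1 h2) hg D (K*ε) (hF' ε h1 h2) hg' (hFg ε h1 h2) 0
  have H1 := fun ε h1 h2 => bp_diff (F ε) g (hF ε h1 h2) hg D (K*ε) (hF' ε h1 h2) hg' (hFg ε h1 h2) 1
  have J0 : 0 ≤ ∫ z : ℝ, (|z| ^ 0 + |z| ^ (0 + 5)) * Real.exp (-(z ^ 2 - D)) :=
    integral_nonneg fun z => by positivity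
  have J1 : 0 ≤ ∫ z : ℝ, (|z| ^ 1 + |z| ^ (1 + 5)) * Real.exp (-(z ^ 2 - D)) :=
    integral_nonneg fun z => by positivity
  generalize (∫ z : ℝ, (|z| ^ 0 + |z| ^ (0 + 5)) * Real.exp (-(z ^ 2 - D))) = A0 at H0 J0
  generalize (∫ z : ℝ, (|z| ^ 1 + |z| ^ (1 + 5)) * Real.exp (-(z ^ 2 - D))) = A1 at H1 J1
  simp only [pow_zero, one_mul, pow_one] at H0 H1
  have hpos := bp_int_pos g hg D hg'
  generalize (∫ z : ℝ, Real.exp (-g z)) = D0 at *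
  generalize (∫ z : ℝ, z * Real.exp (-g z)) = N0 at *
  refine ⟨2 * (K * A1 * D0 + |N0| * (K * A0)) / D0 ^ 2, by positivity,
    min ε₀ (D0 / (2 * (K * A0 + 1))), by positivity, fun ε h1 h2 => ?_⟩
  have h3 := h2.trans_le (min_le_left _ _)
  have h4 := h2.trans_le (min_le_right _ _)
  have H0 := H0 ε h1 h3
  have H1 := H1 ε h1 h3
  generalize (∫ z : ℝ, Real.exp (-F ε z)) = De at *
  generalize (∫ z : ℝ, z * Real.exp (-F ε z)) = Ne at *
  rw [lt_div_iff₀ (by positivity)] at h4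
  have hDe : D0 / 2 ≤ De := by
    have := (abs_le.1 H0).1
    nlinarith
  have hDe0 : 0 < De := by linarith
  rw [div_sub_div _ _ hDe0.ne' hpos.ne', abs_div, abs_of_pos (mul_pos hDe0 hpos),
    div_le_iff₀ (by positivity)]
  have e1 : |Ne * D0 - De * N0| ≤ (K * A1 * D0 + |N0| * (K * A0)) * ε := by
    rw [show Ne * D0 - De * N0 = (Ne - N0) * D0 + - N0 * (De - D0) by ring]
    refine (abs_add_le _ _).trans ?_
    rw [abs_mul, abs_mul, abs_neg, abs_of_pos hpos]
    have := mul_le_mul_of_nonneg_right H1 hpos.le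
    have := mul_le_mul_of_nonneg_left H0 (abs_nonneg N0)
    nlinarith
  refine e1.trans ?_
  have : (K * A1 * D0 + |N0| * (K * A0)) * ε = 2 * (K * A1 * D0 + |N0| * (K * A0)) / D0 ^ 2 * ε * (D0/2 * D0) := by
    field_simp
  rw [this]
  gcongr

def bpI (a b z : ℝ) : ℝ := (z ^ 4 - 2 * b * z ^ 2 + 4 * a * z) / 8

lemma bp_g_lower (a b : ℝ) (r z : ℝ) (hr : |r - a| ≤ 1) :
    z ^ 2 - (2 * (|b| + |a| + 4) ^ 2 + |a| + 1) ≤ bpI r b z := by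
  unfold bpI
  have h0 : |r| ≤ |a| + 1 := by
    have := abs_sub_abs_le_abs_sub r a; linarith
  have hb := le_abs_self b
  have h1 : b * z^2 ≤ |b| * z^2 := by gcongr
  have h2 : |r * z| ≤ (|a| + 1) * (z^2+1) := by
    rw [abs_mul]
    have : |z| ≤ z^2 + 1 := by rw [← sq_abs]; nlinarith [sq_nonneg (|z| - 1)]
    gcongr
  have h3 := (abs_le.1 h2).1
  have : 0 ≤ |b| := abs_nonneg b
  have : 0 ≤ |a| := abs_nonneg a
  nlinarith [sq_nonneg (z^2 - 4 * (|b| + |a| + 4)), sq_nonneg z, mul_nonneg ‹0 ≤ |a|› (sq_nonneg z), mul_nonneg ‹0 ≤ |b|› (sq_nonneg z)]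


lemma bp_cont (a b : ℝ) : Continuous (bpI a b) := by unfold bpI; fun_prop

lemma bp_pearceyU (a b : ℝ) : pearceyU a b =
    (∫ z : ℝ, z * Real.exp (-bpI a b z)) / (∫ z : ℝ, Real.exp (-bpI a b z)) := by
  have hI : (fun a' => pearceyI a' b) = fun a' => ∫ z : ℝ, Real.exp (-bpI a' b z) := by
    funext a'; unfold pearceyI bpI; congr 1; funext z; congr 1; ring
  have hL := fun r z hr => bp_g_lower a b r z hr
  have hL0 := fun z => bp_g_lower a b a z (by simp)
  generalize (2 * (|b| + |a| + 4) ^ 2 + |a| + 1) = D at *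
  have hd : HasDerivAt (fun a' => pearceyI a' b)
      (∫ z : ℝ, -(z / 2) * Real.exp (-bpI a b z)) a := by
    rw [hI]
    refine (hasDerivAt_integral_of_dominated_loc_of_deriv_le (s := Metric.ball a 1)
      (F := fun a' z => Real.exp (-bpI a' b z))
      (F' := fun a' z => -(z / 2) * Real.exp (-bpI a' b z))
      (bound := fun z => |z| ^ 1 * Real.exp (-(z ^ 2 - D)))
      (Metric.ball_mem_nhds a one_pos) ?_ ?_ ?_ ?_ ?_ ?_).2
    · exact Filter.Eventually.of_forall fun r => by
        have := bp_cont r b; fun_prop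
    · simpa using bp_integrable (bpI a b) (bp_cont a b) D hL0 0
    · have := bp_cont a b; fun_prop
    · refine Filter.Eventually.of_forall fun z r hr => ?_
      rw [norm_mul, Real.norm_eq_abs, Real.norm_eq_abs, Real.abs_exp, abs_neg, abs_div, pow_one]
      have : |r - a| ≤ 1 := by
        rw [Metric.mem_ball, Real.dist_eq] at hr; exact hr.le
      have := hL r z this
      gcongr
      rw [abs_two]; linarith [abs_nonneg z]
    · exact bp_int_pow 1 D
    · refine Filter.Eventually.of_forall fun z r hr => ?_
      have : HasDerivAt (fun a' => -bpI a' b z) (-(z/2)) r := by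
        unfold bpI
        have := (((((hasDerivAt_id r).const_mul 4).mul_const z).const_add (z ^ 4 - 2 * b * z ^ 2)).div_const 8).neg
        refine this.congr_deriv ?_
        ring
      refine this.exp.congr_deriv ?_
      ring
  have hpos := bp_int_pos _ (bp_cont a b) D hL0
  have hI' := congrFun hI a
  unfold pearceyU
  rw [(hd.log (by rw [hI']; exact hpos.ne')).deriv, hI', ← mul_div_assoc, ← integral_const_mul]
  congr 2
  funext z; ring

lemma bp_mvt (f f' : ℝ → ℝ) (hf : ∀ x, HasDerivAt f (f' x) x) (h0 : f 0 = 0) (K : ℝ) (hK : 0 ≤ K)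
    (n : ℕ) (h : ∀ x, |f' x| ≤ K * |x| ^ n) (s : ℝ) : |f s| ≤ K * |s| ^ (n + 1) := by
  have := (convex_closedBall (0:ℝ) |s|).norm_image_sub_le_of_norm_hasDerivWithin_le
    (f := f) (f' := f') (C := K * |s| ^ n) (x := 0) (y := s)
    (fun x _ => (hf x).hasDerivWithinAt) (fun x hx => by
      rw [mem_closedBall_zero_iff, Real.norm_eq_abs] at hx
      refine (h x).trans ?_
      gcongr) (by simp) (by simp)
  rw [h0, sub_zero, sub_zero, Real.norm_eq_abs, Real.norm_eq_abs] at this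
  rw [pow_succ, ← mul_assoc]; exact this

def bpPsi (v₀ : ℝ → ℝ) (ξ tc s : ℝ) : ℝ :=
  (∫ u in (0:ℝ)..(ξ + s), v₀ u) - (∫ u in (0:ℝ)..ξ, v₀ u) - v₀ ξ * s + s ^ 2 / (2 * tc)

lemma bp_psi_deriv (v₀ : ℝ → ℝ) (hc : Continuous v₀) (ξ tc s : ℝ) :
    HasDerivAt (bpPsi v₀ ξ tc) (v₀ (ξ + s) - v₀ ξ + s / tc) s := by
  unfold bpPsi
  have h1 : HasDerivAt (fun y => ∫ u in (0:ℝ)..y, v₀ u) (v₀ (ξ + s)) (ξ + s) :=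
    intervalIntegral.integral_hasDerivAt_right (hc.intervalIntegrable _ _)
      hc.stronglyMeasurable.stronglyMeasurableAtFilter hc.continuousAt
  have h2 := (((h1.comp_const_add ξ s).sub_const (∫ u in (0:ℝ)..ξ, v₀ u)).sub
    ((hasDerivAt_id s).const_mul (v₀ ξ))).add ((hasDerivAt_pow 2 s).div_const (2 * tc))
  refine h2.congr_deriv ?_
  by_cases h : tc = 0
  · simp [h]
  · field_simp; push_cast; ring

lemma bp_psi (v₀ : ℝ → ℝ) (hsm : ContDiff ℝ (⊤ : ℕ∞) v₀)
    (hbdd : ∃ M : ℝ, ∀ s : ℝ, |v₀ s| ≤ M)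
    (hbddderiv : ∀ n : ℕ, ∃ M : ℝ, ∀ s : ℝ, |iteratedDeriv n v₀ s| ≤ M)
    (ξc : ℝ)
    (hneg : deriv v₀ ξc < 0)
    (hmin : ∀ ξ : ℝ, ξ ≠ ξc → deriv v₀ ξc < deriv v₀ ξ)
    (h2nd : deriv (deriv v₀) ξc = 0)
    (h3rd : 0 < deriv (deriv (deriv v₀)) ξc)
    (tc : ℝ)
    (htc : tc = -1 / deriv v₀ ξc) (htc0 : 0 < tc) (c : ℝ)
    (hc : c = deriv (deriv (deriv v₀)) ξc / 24) :
    (∃ K ≥ (0:ℝ), ∀ s, |bpPsi v₀ ξc tc s - c * s ^ 4| ≤ K * |s| ^ 5) ∧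
    (∃ m > (0:ℝ), ∀ s, c / 2 * s ^ 4 ≤ bpPsi v₀ ξc tc s ∨ m * s ^ 2 ≤ bpPsi v₀ ξc tc s) := by
  have hv0 := hsm.continuous
  have hd : ∀ n : ℕ, ∀ x, HasDerivAt (iteratedDeriv n v₀) (iteratedDeriv (n+1) v₀ x) x := by
    intro n x
    rw [iteratedDeriv_succ]
    exact ((hsm.differentiable_iteratedDeriv n (by exact_mod_cast WithTop.coe_lt_top _)) x).hasDerivAt
  have e1 : iteratedDeriv 1 v₀ = deriv v₀ := iteratedDeriv_one
  have e2 : iteratedDeriv 2 v₀ = deriv (deriv v₀) := by rw [iteratedDeriv_succ, e1]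
  have e3 : iteratedDeriv 3 v₀ = deriv (deriv (deriv v₀)) := by rw [iteratedDeriv_succ, e2]
  rw [← e1] at hneg hmin htc
  rw [← e2] at h2nd
  rw [← e3] at h3rd hc
  have hd0 : ∀ x, HasDerivAt v₀ (iteratedDeriv 1 v₀ x) x := by simpa using hd 0
  have htc' : iteratedDeriv 1 v₀ ξc = -1 / tc := by
    rw [htc]; field_simp
  have hcpos : 0 < c := by rw [hc]; positivity
  have hK : ∃ K ≥ (0:ℝ), ∀ s, |bpPsi v₀ ξc tc s - c * s ^ 4| ≤ K * |s| ^ 5 := by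
    obtain ⟨K, hK⟩ := hbddderiv 4
    have hK0 : 0 ≤ K := (abs_nonneg _).trans (hK 0)
    refine ⟨K, hK0, ?_⟩
    have g3 : ∀ s, |iteratedDeriv 3 v₀ (ξc + s) - iteratedDeriv 3 v₀ ξc| ≤ K * |s| ^ (0+1) :=
      bp_mvt _ (fun s => iteratedDeriv 4 v₀ (ξc + s))
        (fun s => ((hd 3 _).comp_const_add ξc s).sub_const _) (by simp) K hK0 0
        (fun s => by simpa using hK _)
    have g2 : ∀ s, |iteratedDeriv 2 v₀ (ξc + s) - iteratedDeriv 3 v₀ ξc * s| ≤ K * |s| ^ (1+1) :=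
      bp_mvt _ _
        (fun s => by
          refine HasDerivAt.congr_deriv (((hd 2 _).comp_const_add ξc s).sub ((hasDerivAt_id s).const_mul (iteratedDeriv 3 v₀ ξc))) ?_
          simp) (by simp [h2nd]) K hK0 1 g3
    have g1 : ∀ s, |iteratedDeriv 1 v₀ (ξc + s) - iteratedDeriv 1 v₀ ξc - iteratedDeriv 3 v₀ ξc / 2 * s ^ 2| ≤ K * |s| ^ (2+1) :=
      bp_mvt _ _
        (fun s => by
          refine HasDerivAt.congr_deriv ((((hd 1 _).comp_const_add ξc s).sub_const (iteratedDeriv 1 v₀ ξc)).sub ((hasDerivAt_pow 2 s).const_mul (iteratedDeriv 3 v₀ ξc / 2))) ?_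
          push_cast; ring) (by simp) K hK0 2 g2
    have g0 : ∀ s, |v₀ (ξc + s) - v₀ ξc + s / tc - iteratedDeriv 3 v₀ ξc / 6 * s ^ 3| ≤ K * |s| ^ (3+1) :=
      bp_mvt _ _
        (fun s => by
          refine HasDerivAt.congr_deriv (((((hd0 _).comp_const_add ξc s).sub_const (v₀ ξc)).add ((hasDerivAt_id s).div_const tc)).sub ((hasDerivAt_pow 3 s).const_mul (iteratedDeriv 3 v₀ ξc / 6))) ?_
          rw [htc']; push_cast; ring) (by simp) K hK0 3 g1
    exact bp_mvt _ _
        (fun s => by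
          refine HasDerivAt.congr_deriv ((bp_psi_deriv v₀ hv0 ξc tc s).sub ((hasDerivAt_pow 4 s).const_mul c)) ?_
          rw [hc]; push_cast; ring) (by simp [bpPsi]) K hK0 4 g0
  refine ⟨hK, ?_⟩
  obtain ⟨K, hK0, hK⟩ := hK
  -- local
  set δ : ℝ := c / (2 * (K + 1)) with hδ
  have hδ0 : 0 < δ := by positivity
  have hloc : ∀ s, |s| ≤ δ → c / 2 * s ^ 4 ≤ bpPsi v₀ ξc tc s := by
    intro s hs
    have h1 := (abs_le.1 (hK s)).1
    have h2 : K * |s| ^ 5 ≤ c / 2 * s ^ 4 := by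
      have : K * |s| ≤ c / 2 := by
        calc K * |s| ≤ (K+1) * δ := by gcongr; linarith
          _ = c / 2 := by rw [hδ]; field_simp
      calc K * |s| ^ 5 = K * |s| * |s| ^ 4 := by ring
        _ ≤ c / 2 * |s| ^ 4 := by gcongr
        _ = c / 2 * s ^ 4 := by rw [Even.pow_abs (by decide)]
    linarith
  obtain ⟨M, hM⟩ := hbdd
  have hM0 : 0 ≤ M := (abs_nonneg _).trans (hM 0)
  have hfar : ∀ s, s ^ 2 / (2 * tc) - 2 * M * |s| ≤ bpPsi v₀ ξc tc s := by
    intro s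
    have := bp_mvt (fun s => bpPsi v₀ ξc tc s - s ^ 2 / (2 * tc)) (fun s => v₀ (ξc + s) - v₀ ξc)
      (fun s => by
        refine HasDerivAt.congr_deriv ((bp_psi_deriv v₀ hv0 ξc tc s).sub ((hasDerivAt_pow 2 s).div_const (2 * tc))) ?_
        field_simp; push_cast; ring) (by simp [bpPsi]) (2 * M) (by positivity) 0 (fun s => by
          have h1 := abs_le.1 (hM (ξc + s))
          have h2 := abs_le.1 (hM ξc)
          rw [pow_zero, mul_one, abs_le]; constructor <;> linarith) s
    have := (abs_le.1 this).1
    simp only [zero_add, pow_one] at this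
    linarith
  have hwmono : Monotone (fun s => v₀ (ξc + s) - v₀ ξc + s / tc) := by
    apply monotone_of_hasDerivAt_nonneg (f' := fun s => iteratedDeriv 1 v₀ (ξc + s) + 1 / tc)
    · intro s
      exact (((hd0 _).comp_const_add ξc s).sub_const (v₀ ξc)).add ((hasDerivAt_id s).div_const tc)
    · intro s
      have : iteratedDeriv 1 v₀ ξc ≤ iteratedDeriv 1 v₀ (ξc + s) := by
        by_cases h : ξc + s = ξc
        · rw [h]
        · exact (hmin _ h).le
      rw [htc'] at this
      have h5 : -1 / tc = - (1 / tc) := by ring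
      show 0 ≤ iteratedDeriv 1 v₀ (ξc + s) + 1 / tc
      linarith
  have hmon : MonotoneOn (bpPsi v₀ ξc tc) (Set.Ici 0) := by
    apply monotoneOn_of_deriv_nonneg (convex_Ici 0)
    · exact fun s _ => (bp_psi_deriv v₀ hv0 ξc tc s).continuousAt.continuousWithinAt
    · exact fun s _ => (bp_psi_deriv v₀ hv0 ξc tc s).differentiableAt.differentiableWithinAt
    · intro s hs
      rw [interior_Ici] at hs
      rw [(bp_psi_deriv v₀ hv0 ξc tc s).deriv]
      simpa using hwmono (le_of_lt hs)
  have hanti : AntitoneOn (bpPsi v₀ ξc tc) (Set.Iic 0) := by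
    apply antitoneOn_of_deriv_nonpos (convex_Iic 0)
    · exact fun s _ => (bp_psi_deriv v₀ hv0 ξc tc s).continuousAt.continuousWithinAt
    · exact fun s _ => (bp_psi_deriv v₀ hv0 ξc tc s).differentiableAt.differentiableWithinAt
    · intro s hs
      rw [interior_Iic] at hs
      rw [(bp_psi_deriv v₀ hv0 ξc tc s).deriv]
      simpa using hwmono (le_of_lt hs)
  have hmid : ∀ s, δ ≤ |s| → c / 2 * δ ^ 4 ≤ bpPsi v₀ ξc tc s := by
    intro s hs
    rcases le_abs.1 hs with h | h
    · exact (hloc δ (by rw [abs_of_pos hδ0])).trans (hmon (Set.mem_Ici.2 hδ0.le) (Set.mem_Ici.2 (by linarith)) h)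
    · have := (hloc (-δ) (by rw [abs_neg, abs_of_pos hδ0])).trans (hanti (Set.mem_Iic.2 (by linarith : s ≤ 0)) (Set.mem_Iic.2 (by linarith)) (by linarith))
      rwa [Even.neg_pow (by decide)] at this
  set L : ℝ := 8 * (M + 1) * tc with hL
  have hL0 : 0 < L := by positivity
  refine ⟨min (1 / (4 * tc)) (c / 2 * δ ^ 4 / L ^ 2), by positivity, fun s => ?_⟩
  by_cases h1 : |s| ≤ δ
  · exact Or.inl (hloc s h1)
  right
  push Not at h1
  by_cases h2 : |s| ≤ L
  · refine le_trans ?_ (hmid s h1.le)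
    calc _ ≤ (c / 2 * δ ^ 4 / L ^ 2) * s ^ 2 := by gcongr; exact min_le_right _ _
      _ ≤ (c / 2 * δ ^ 4 / L ^ 2) * L ^ 2 := by
        rw [← sq_abs s]; gcongr
      _ = _ := by field_simp
  · push Not at h2
    refine le_trans ?_ (hfar s)
    calc _ ≤ (1 / (4 * tc)) * s ^ 2 := by gcongr; exact min_le_left _ _
      _ ≤ _ := by
        have : 2 * M * |s| ≤ s^2 / (4 * tc) := by
          rw [le_div_iff₀ (by positivity), ← sq_abs s]
          have : 8 * M * tc ≤ L := by rw [hL]; nlinarith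
          nlinarith [abs_nonneg s]
        have e : s^2 / (2*tc) = s^2/(4*tc) + s^2/(4*tc) := by field_simp; ring
        rw [e, one_div_mul_eq_div]; linarith

def bpF (v₀ : ℝ → ℝ) (ξ tc κ a b ε z : ℝ) : ℝ :=
  bpPsi v₀ ξ tc (-(tc * ε * z)) / (2 * (κ * ε ^ 4)) +
    tc / (tc + b * (κ * ε ^ 2)) * (-2 * b * z ^ 2 + 4 * a * z) / 8

lemma bp_subst (h : ℝ → ℝ) (ξ k : ℝ) (hk : 0 < k) :
    ∫ η : ℝ, h η = k * ∫ z : ℝ, h (ξ - k * z) := by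
  have h1 := MeasureTheory.Measure.integral_comp_mul_left (fun y => h (ξ - y)) k
  rw [h1, integral_sub_left_eq_self h volume ξ, abs_of_pos (inv_pos.2 hk), smul_eq_mul,
    mul_inv_cancel_left₀ hk.ne']

lemma bp_F_cont (v₀ : ℝ → ℝ) (hv0 : Continuous v₀) (ξ tc κ a b ε : ℝ) :
    Continuous (bpF v₀ ξ tc κ a b ε) := by
  have : Continuous (bpPsi v₀ ξ tc) :=
    continuous_iff_continuousAt.2 fun s => (bp_psi_deriv v₀ hv0 ξ tc s).continuousAt
  unfold bpF
  fun_prop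

lemma bp_t (tc κ b ε : ℝ) (htc : 0 < tc) (hκ : 0 < κ) (hε : 0 < ε) (hε1 : ε < 1)
    (hε2 : ε < tc / (2 * (|b| * κ + 1))) :
    tc / 2 ≤ tc + b * (κ * ε ^ 2) ∧ |tc / (tc + b * (κ * ε ^ 2)) - 1| ≤ 2 * |b| * κ / tc * ε ∧
    |tc / (tc + b * (κ * ε ^ 2))| ≤ 2 := by
  have hb := abs_nonneg b
  have hb1 := neg_abs_le b
  have hee : ε ^ 2 ≤ ε := by nlinarith
  rw [lt_div_iff₀ (by positivity)] at hε2
  have h1 : |b| * κ * ε ^ 2 ≤ |b| * κ * ε := by gcongr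
  have h0 : -(|b| * κ * ε ^ 2) ≤ b * (κ * ε ^ 2) := by
    have : 0 ≤ κ * ε ^ 2 := by positivity
    nlinarith
  have ht : tc / 2 ≤ tc + b * (κ * ε ^ 2) := by nlinarith
  have ht0 : 0 < tc + b * (κ * ε ^ 2) := by linarith
  refine ⟨ht, ?_, ?_⟩
  · rw [div_sub_one ht0.ne', abs_div, abs_of_pos ht0, div_le_iff₀ ht0]
    have : |tc - (tc + b * (κ * ε ^ 2))| = |b| * κ * ε ^ 2 := by
      rw [show tc - (tc + b * (κ * ε ^ 2)) = -(b * (κ * ε^2)) by ring, abs_neg, abs_mul,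
        abs_of_pos (by positivity : 0 < κ * ε ^ 2)]; ring
    rw [this]
    calc |b| * κ * ε ^ 2 ≤ |b| * κ * ε := h1
      _ = 2 * |b| * κ / tc * ε * (tc / 2) := by field_simp
      _ ≤ _ := by gcongr
  · rw [abs_div, abs_of_pos ht0, abs_of_pos htc, div_le_iff₀ ht0]; linarith

lemma bp_F (v₀ : ℝ → ℝ) (ξ tc κ a b c K m : ℝ) (htc : 0 < tc) (hκ : 0 < κ)
    (hc : c = κ / (4 * tc ^ 4)) (hm : 0 < m) (hK0 : 0 ≤ K)
    (hK : ∀ s, |bpPsi v₀ ξ tc s - c * s ^ 4| ≤ K * |s| ^ 5)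
    (hlow : ∀ s, c / 2 * s ^ 4 ≤ bpPsi v₀ ξ tc s ∨ m * s ^ 2 ≤ bpPsi v₀ ξ tc s) :
    ∃ D K' ε₀ : ℝ, 0 < ε₀ ∧ 0 ≤ K' ∧ (∀ z, z ^ 2 - D ≤ bpI a b z) ∧
      (∀ ε, 0 < ε → ε < ε₀ → ∀ z, z ^ 2 - D ≤ bpF v₀ ξ tc κ a b ε z) ∧
      (∀ ε, 0 < ε → ε < ε₀ → ∀ z, |bpF v₀ ξ tc κ a b ε z - bpI a b z| ≤ (K' * ε) * (1 + |z| ^ 5)) := by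
  have ha0 := abs_nonneg a
  have hb0 := abs_nonneg b
  have hz1 : ∀ z : ℝ, |z| ≤ z ^ 2 + 1 := fun z => by
    rw [← sq_abs]; nlinarith [sq_nonneg (|z| - 1)]
  have hlam : ∀ z : ℝ, |(-2 * b * z ^ 2 + 4 * a * z) / 8| ≤ |b| / 4 * z ^ 2 + |a| / 2 * |z| := by
    intro z
    rw [show (-2 * b * z ^ 2 + 4 * a * z) / 8 = -(b / 4 * z^2) + a / 2 * z by ring]
    refine (abs_add_le _ _).trans (le_of_eq ?_)
    rw [abs_neg, abs_mul, abs_mul, abs_div, abs_div, abs_of_nonneg (sq_nonneg z), abs_two,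
      abs_of_pos (by norm_num : (0:ℝ) < 4)]
  set B : ℝ := |b| / 2 + |a| + 1 with hB
  have hB0 : 0 < B := by positivity
  refine ⟨max (2 * (|b| + |a| + 4) ^ 2 + |a| + 1) (4 * B ^ 2 + |a|),
    2 * |b| * κ / tc * (|b| / 2 + |a|) + K * tc ^ 5 / (2 * κ),
    min 1 (min (tc / (2 * (|b| * κ + 1))) (m * tc ^ 2 / (2 * κ * B))), by positivity, by positivity,
    fun z => ?_, fun ε h1 h2 z => ?_, fun ε h1 h2 z => ?_⟩
  · have := bp_g_lower a b a z (by simp)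
    have := le_max_left (2 * (|b| + |a| + 4) ^ 2 + |a| + 1) (4 * B ^ 2 + |a|)
    linarith
  · have e1 := h2.trans_le (min_le_left _ _)
    have e2 := h2.trans_le ((min_le_right _ _).trans (min_le_left _ _))
    have e3 := h2.trans_le ((min_le_right _ _).trans (min_le_right _ _))
    obtain ⟨t1, t2, t3⟩ := bp_t tc κ b ε htc hκ h1 e1 e2
    have hmain : B * z ^ 2 - 4 * B ^ 2 ≤ bpPsi v₀ ξ tc (-(tc * ε * z)) / (2 * (κ * ε ^ 4)) := by
      rw [le_div_iff₀ (by positivity)]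
      rcases hlow (-(tc * ε * z)) with h | h
      · refine le_trans ?_ h
        have : c / 2 * (-(tc * ε * z)) ^ 4 = z ^ 4 / 16 * (2 * (κ * ε ^ 4)) := by
          rw [hc]; field_simp; ring
        rw [this]
        gcongr
        nlinarith [sq_nonneg (z^2/4 - 2 * B)]
      · refine le_trans ?_ h
        rw [lt_div_iff₀ (by positivity)] at e3
        have q1 : ε ^ 2 * (2 * κ * B) ≤ m * tc ^ 2 := by
          have : ε ^ 2 ≤ ε := by nlinarith
          have : ε ^ 2 * (2 * κ * B) ≤ ε * (2 * κ * B) := by gcongr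
          linarith
        have q2 : ε ^ 2 * (2 * κ * B) * (ε ^ 2 * z ^ 2) ≤ m * tc ^ 2 * (ε ^ 2 * z ^ 2) := by gcongr
        have q3 : 0 ≤ 4 * B ^ 2 * (2 * (κ * ε ^ 4)) := by positivity
        nlinarith
    have hl : |tc / (tc + b * (κ * ε ^ 2)) * (-2 * b * z ^ 2 + 4 * a * z) / 8| ≤
        2 * (|b| / 4 * z ^ 2 + |a| / 2 * |z|) := by
      rw [mul_div_assoc, abs_mul]
      exact mul_le_mul t3 (hlam z) (abs_nonneg _) (by norm_num)
    have := (abs_le.1 hl).1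
    have := le_max_right (2 * (|b| + |a| + 4) ^ 2 + |a| + 1) (4 * B ^ 2 + |a|)
    have := mul_le_mul_of_nonneg_left (hz1 z) ha0
    unfold bpF
    rw [hB] at hmain
    nlinarith
  · have e1 := h2.trans_le (min_le_left _ _)
    have e2 := h2.trans_le ((min_le_right _ _).trans (min_le_left _ _))
    obtain ⟨t1, t2, t3⟩ := bp_t tc κ b ε htc hκ h1 e1 e2
    have hk := hK (-(tc * ε * z))
    have hsplit : bpF v₀ ξ tc κ a b ε z - bpI a b z =
        (bpPsi v₀ ξ tc (-(tc * ε * z)) - c * (-(tc * ε * z)) ^ 4) / (2 * (κ * ε ^ 4)) +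
        (tc / (tc + b * (κ * ε ^ 2)) - 1) * ((-2 * b * z ^ 2 + 4 * a * z) / 8) := by
      have : c * (-(tc * ε * z)) ^ 4 / (2 * (κ * ε ^ 4)) = z ^ 4 / 8 := by
        rw [hc]; field_simp; ring
      rw [sub_div, this]
      unfold bpF bpI
      ring
    rw [hsplit]
    refine (abs_add_le _ _).trans ?_
    have p1 : |(bpPsi v₀ ξ tc (-(tc * ε * z)) - c * (-(tc * ε * z)) ^ 4) / (2 * (κ * ε ^ 4))| ≤
        K * tc ^ 5 / (2 * κ) * ε * |z| ^ 5 := by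
      rw [abs_div, abs_of_pos (by positivity : 0 < 2 * (κ * ε ^ 4)), div_le_iff₀ (by positivity)]
      refine hk.trans (le_of_eq ?_)
      rw [abs_neg, abs_mul, abs_of_pos (by positivity : 0 < tc * ε)]
      field_simp
    have hz5 : |z| ≤ 1 + |z| ^ 5 := by
      rcases le_total |z| 1 with h | h
      · have : 0 ≤ |z| ^ 5 := by positivity
        linarith
      · have := le_self_pow₀ h (show 5 ≠ 0 by norm_num); linarith
    have hz52 : z ^ 2 ≤ 1 + |z| ^ 5 := by
      rw [← sq_abs]
      rcases le_total |z| 1 with h | h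
      · have : 0 ≤ |z| ^ 5 := by positivity
        have := pow_le_one₀ (n := 2) (abs_nonneg z) h
        linarith
      · have := pow_le_pow_right₀ h (show 2 ≤ 5 by norm_num); linarith
    have p2 : |(tc / (tc + b * (κ * ε ^ 2)) - 1) * ((-2 * b * z ^ 2 + 4 * a * z) / 8)| ≤
        (2 * |b| * κ / tc * ε) * ((|b| / 2 + |a|) * (1 + |z| ^ 5)) := by
      rw [abs_mul]
      refine mul_le_mul t2 ((hlam z).trans ?_) (abs_nonneg _) (by positivity)
      have r1 := mul_le_mul_of_nonneg_left hz52 hb0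
      have r2 := mul_le_mul_of_nonneg_left hz5 ha0
      have : 0 ≤ |b| * (1 + |z| ^ 5) := by positivity
      have : 0 ≤ |a| * (1 + |z| ^ 5) := by positivity
      linarith
    have p3 : 0 ≤ K * tc ^ 5 / (2 * κ) * ε := by positivity
    nlinarith

lemma bp_exponent (v₀ : ℝ → ℝ) (ξ tc κ a b ε z : ℝ) (htc : 0 < tc) (hκ : 0 < κ) (hε : 0 < ε)
    (ht : 0 < tc + b * (κ * ε ^ 2)) :
    -((∫ s in (0 : ℝ)..(ξ - tc * ε * z), v₀ s) +
      ((v₀ ξ * tc + ξ) + v₀ ξ * b * (κ * ε ^ 2) + a * (κ * ε ^ 3) - (ξ - tc * ε * z)) ^ 2 /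
        (2 * (tc + b * (κ * ε ^ 2)))) / (2 * (κ * ε ^ 4)) =
    -((∫ s in (0:ℝ)..ξ, v₀ s) + (v₀ ξ) ^ 2 * (tc + b * (κ * ε ^ 2)) / 2 + v₀ ξ * (a * (κ * ε ^ 3))
      + (a * (κ * ε ^ 3)) ^ 2 / (2 * (tc + b * (κ * ε ^ 2)))) / (2 * (κ * ε ^ 4)) +
      -bpF v₀ ξ tc κ a b ε z := by
  unfold bpF bpPsi
  rw [show ξ + -(tc * ε * z) = ξ - tc * ε * z by ring]
  generalize (∫ s in (0 : ℝ)..(ξ - tc * ε * z), v₀ s) = P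
  generalize (∫ s in (0 : ℝ)..ξ, v₀ s) = Q
  generalize v₀ ξ = w
  have ht' : tc + b * κ * ε ^ 2 ≠ 0 := by rw [mul_assoc]; exact ht.ne'
  field_simp
  ring

lemma bp_ratio_eq (v₀ : ℝ → ℝ) (hv0 : Continuous v₀) (ξ tc κ a b ε D : ℝ) (htc : 0 < tc)
    (hκ : 0 < κ) (hε : 0 < ε) (ht : 0 < tc + b * (κ * ε ^ 2))
    (hlow : ∀ z, z ^ 2 - D ≤ bpF v₀ ξ tc κ a b ε z) (G : ℝ → ℝ → ℝ → ℝ)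
    (hG : ∀ η x t : ℝ, G η x t = (∫ s in (0 : ℝ)..η, v₀ s) + (x - η) ^ 2 / (2 * t)) (x t : ℝ)
    (hx : x = (v₀ ξ * tc + ξ) + v₀ ξ * b * (κ * ε ^ 2) + a * (κ * ε ^ 3))
    (htt : t = tc + b * (κ * ε ^ 2)) :
    (∫ η : ℝ, ((x - η) / t) * Real.exp (-(G η x t) / (2 * (κ * ε ^ 4)))) /
        (∫ η : ℝ, Real.exp (-(G η x t) / (2 * (κ * ε ^ 4)))) =
      v₀ ξ + a * (κ * ε ^ 3) / t + tc / t * ε *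
        ((∫ z : ℝ, z * Real.exp (-bpF v₀ ξ tc κ a b ε z)) /
          ∫ z : ℝ, Real.exp (-bpF v₀ ξ tc κ a b ε z)) := by
  have hcont := bp_F_cont v₀ hv0 ξ tc κ a b ε
  have i0 := bp_integrable _ hcont D hlow 0
  have i1 := bp_integrable _ hcont D hlow 1
  simp only [pow_zero, one_mul, pow_one] at i0 i1
  have hpos := bp_int_pos _ hcont D hlow
  rw [bp_subst _ ξ (tc * ε) (by positivity),
    bp_subst (fun η => Real.exp (-(G η x t) / (2 * (κ * ε ^ 4)))) ξ (tc * ε) (by positivity)]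
  obtain ⟨A, hA⟩ : ∃ A, ∀ z, -(G (ξ - tc * ε * z) x t) / (2 * (κ * ε ^ 4)) =
      A + -bpF v₀ ξ tc κ a b ε z :=
    ⟨_, fun z => by rw [hG, hx, htt]; exact bp_exponent v₀ ξ tc κ a b ε z htc hκ hε ht⟩
  simp only [hA, Real.exp_add]
  have hx' : ∀ z, (x - (ξ - tc * ε * z)) / t = (v₀ ξ + a * (κ * ε ^ 3) / t) + tc / t * ε * z := by
    intro z
    rw [hx]
    have : t ≠ 0 := by rw [htt]; exact ht.ne'
    field_simp
    rw [htt]; ring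
  have e1 : (∫ z : ℝ, (x - (ξ - tc * ε * z)) / t *
      (Real.exp A * Real.exp (-bpF v₀ ξ tc κ a b ε z))) =
      Real.exp A * ((v₀ ξ + a * (κ * ε ^ 3) / t) * (∫ z : ℝ, Real.exp (-bpF v₀ ξ tc κ a b ε z)) +
        tc / t * ε * ∫ z : ℝ, z * Real.exp (-bpF v₀ ξ tc κ a b ε z)) := by
    rw [← integral_const_mul, ← integral_const_mul, ← integral_add (i0.const_mul _) (i1.const_mul _),
      ← integral_const_mul]
    congr 1; funext z; rw [hx']; ring
  rw [e1, integral_const_mul]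
  have hA0 := (Real.exp_pos A).ne'
  have hD0 := hpos.ne'
  have : tc * ε ≠ 0 := by positivity
  rw [mul_div_mul_left _ _ this, mul_div_mul_left _ _ hA0, add_div, mul_div_cancel_right₀ _ hD0,
    mul_div_assoc (tc / t * ε)]

/-- Near a generic gradient catastrophe of the Hopf equation, the Cole–Hopf
solution of the Burgers equation admits the Pearcey expansion
`v = v_c + (ν/κ)^{1/4} U((x̄ - v_c t̄)/(κν³)^{1/4}, t̄/(κν)^{1/2}) + O(ν^{1/2})`. -/
theorem burgers_pearcey_expansion
    (v₀ : ℝ → ℝ) (hsm : ContDiff ℝ (⊤ : ℕ∞) v₀)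
    (hbdd : ∃ M : ℝ, ∀ s : ℝ, |v₀ s| ≤ M)
    (hbddderiv : ∀ n : ℕ, ∃ M : ℝ, ∀ s : ℝ, |iteratedDeriv n v₀ s| ≤ M)
    (ξc : ℝ)
    (hneg : deriv v₀ ξc < 0)
    (hmin : ∀ ξ : ℝ, ξ ≠ ξc → deriv v₀ ξc < deriv v₀ ξ)
    (h2nd : deriv (deriv v₀) ξc = 0)
    (h3rd : 0 < deriv (deriv (deriv v₀)) ξc)
    (tc vc xc κ : ℝ)
    (htc : tc = -1 / deriv v₀ ξc)
    (hvc : vc = v₀ ξc)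
    (hxc : xc = vc * tc + ξc)
    (hκ : κ = tc ^ 4 * deriv (deriv (deriv v₀)) ξc / 6)
    (G : ℝ → ℝ → ℝ → ℝ)
    (hG : ∀ η x t : ℝ, G η x t = (∫ s in (0 : ℝ)..η, v₀ s) + (x - η) ^ 2 / (2 * t))
    (v : ℝ → ℝ → ℝ → ℝ)
    (hv : ∀ x t ν : ℝ, v x t ν =
      (∫ η : ℝ, ((x - η) / t) * Real.exp (-(G η x t) / (2 * ν))) /
        (∫ η : ℝ, Real.exp (-(G η x t) / (2 * ν))))
    (a b : ℝ) :
    ∃ C > (0 : ℝ), ∃ ν₀ > (0 : ℝ), ∀ ν : ℝ, 0 < ν → ν < ν₀ →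
      |v (xc + vc * b * Real.sqrt (κ * ν) + a * (κ * ν ^ 3) ^ ((1 : ℝ) / 4))
          (tc + b * Real.sqrt (κ * ν)) ν
        - vc - (ν / κ) ^ ((1 : ℝ) / 4) * pearceyU a b| ≤ C * Real.sqrt ν := by
  have htc0 : 0 < tc := by rw [htc]; exact div_pos_of_neg_of_neg (by norm_num) hneg
  have hκ0 : 0 < κ := by rw [hκ]; positivity
  obtain ⟨⟨K, hK0, hK⟩, m, hm, hlow⟩ := bp_psi v₀ hsm hbdd hbddderiv ξc hneg hmin h2nd h3rd tc htc
    htc0 _ rfl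
  obtain ⟨D, K', ε₀, hε₀, hK', hg, hF, hFg⟩ := bp_F v₀ ξc tc κ a b _ K m htc0 hκ0
    (by rw [hκ]; field_simp; norm_num) hm hK0 hK hlow
  obtain ⟨C, hC, ε₁, hε₁, hr⟩ := bp_ratio (bpF v₀ ξc tc κ a b) (bpI a b) (bp_cont a b) D K' ε₀ hε₀
    hK' hg (fun ε _ _ => bp_F_cont v₀ hsm.continuous ξc tc κ a b ε) hF hFg
  rw [← bp_pearceyU] at hr
  set U := pearceyU a b with hU
  set C' : ℝ := 2 * |a| * κ / tc + 2 * |b| * κ / tc * (|U| + C) + C with hC'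
  have hC'0 : 0 ≤ C' := by positivity
  set ε₂ : ℝ := min (min 1 (tc / (2 * (|b| * κ + 1)))) (min ε₀ ε₁) with hε₂
  have hε₂0 : 0 < ε₂ := by positivity
  refine ⟨C' / Real.sqrt κ + 1, by positivity, κ * ε₂ ^ 4, by positivity, fun ν hν hν' => ?_⟩
  obtain ⟨ε, hε, hνε, hεdef⟩ : ∃ ε : ℝ, 0 < ε ∧ ν = κ * ε ^ 4 ∧ (ν / κ) ^ ((1:ℝ)/4) = ε := by
    refine ⟨_, Real.rpow_pos_of_pos (div_pos hν hκ0) _, ?_, rfl⟩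
    rw [← Real.rpow_natCast, ← Real.rpow_mul (div_pos hν hκ0).le]
    norm_num
    field_simp
  rw [hεdef]
  have hεlt : ε < ε₂ := by
    rw [hνε] at hν'
    exact lt_of_pow_lt_pow_left₀ 4 hε₂0.le (lt_of_mul_lt_mul_left hν' hκ0.le)
  have l1 := hεlt.trans_le ((min_le_left _ _).trans (min_le_left _ _))
  have l2 := hεlt.trans_le ((min_le_left _ _).trans (min_le_right _ _))
  have l3 := hεlt.trans_le ((min_le_right _ _).trans (min_le_left _ _))
  have l4 := hεlt.trans_le ((min_le_right _ _).trans (min_le_right _ _))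
  have s1 : Real.sqrt (κ * ν) = κ * ε ^ 2 := by
    rw [hνε, show κ * (κ * ε ^ 4) = (κ * ε ^ 2) ^ 2 by ring, Real.sqrt_sq (by positivity)]
  have s2 : (κ * ν ^ 3) ^ ((1:ℝ)/4) = κ * ε ^ 3 := by
    rw [hνε, show κ * (κ * ε ^ 4) ^ 3 = (κ * ε ^ 3) ^ 4 by ring, ← Real.rpow_natCast,
      ← Real.rpow_mul (by positivity)]
    norm_num
  have s3 : Real.sqrt ν = Real.sqrt κ * ε ^ 2 := by
    rw [hνε, Real.sqrt_mul hκ0.le, show ε ^ 4 = (ε ^ 2) ^ 2 by ring, Real.sqrt_sq (by positivity)]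
  obtain ⟨t1, t2, t3⟩ := bp_t tc κ b ε htc0 hκ0 hε l1 l2
  have ht0 : 0 < tc + b * (κ * ε ^ 2) := by linarith
  rw [s1, s2, s3, hv, hνε, bp_ratio_eq v₀ hsm.continuous ξc tc κ a b ε D htc0 hκ0 hε ht0
    (hF ε hε l3) G hG _ _ (by rw [hxc, hvc]) rfl, ← hvc]
  have hr := hr ε hε l4
  generalize ((∫ z : ℝ, z * Real.exp (-bpF v₀ ξc tc κ a b ε z)) /
          ∫ z : ℝ, Real.exp (-bpF v₀ ξc tc κ a b ε z)) = R at hr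
  have hsq : 0 < Real.sqrt κ := Real.sqrt_pos.2 hκ0
  have hfin : C' * ε ^ 2 ≤ (C' / Real.sqrt κ + 1) * (Real.sqrt κ * ε ^ 2) := by
    have : (C' / Real.sqrt κ + 1) * (Real.sqrt κ * ε ^ 2) = C' * ε ^ 2 + Real.sqrt κ * ε ^ 2 := by
      field_simp
    rw [this]
    have : 0 ≤ Real.sqrt κ * ε ^ 2 := by positivity
    linarith
  refine le_trans ?_ hfin
  have hRb : |R| ≤ |U| + C := by
    have h1 := abs_sub_abs_le_abs_sub R U
    have : C * ε ≤ C := mul_le_of_le_one_right hC l1.le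
    linarith
  have q1 : |a * (κ * ε ^ 3) / (tc + b * (κ * ε ^ 2))| ≤ 2 * |a| * κ / tc * ε ^ 2 := by
    rw [abs_div, abs_of_pos ht0, div_le_iff₀ ht0, abs_mul,
      abs_of_pos (by positivity : 0 < κ * ε ^ 3)]
    calc |a| * (κ * ε ^ 3) ≤ |a| * (κ * ε ^ 2) := by
          have : ε ^ 3 ≤ ε ^ 2 := pow_le_pow_of_le_one hε.le l1.le (by norm_num)
          gcongr
      _ = 2 * |a| * κ / tc * ε ^ 2 * (tc / 2) := by field_simp
      _ ≤ _ := by gcongr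
  have q2 : |(tc / (tc + b * (κ * ε ^ 2)) - 1) * ε * R| ≤
      2 * |b| * κ / tc * (|U| + C) * ε ^ 2 := by
    rw [abs_mul, abs_mul, abs_of_pos hε]
    calc _ ≤ (2 * |b| * κ / tc * ε) * ε * (|U| + C) := by gcongr
      _ = _ := by ring
  have q3 : |ε * (R - U)| ≤ C * ε ^ 2 := by
    rw [abs_mul, abs_of_pos hε]
    calc _ ≤ ε * (C * ε) := by gcongr
      _ = _ := by ring
  have hsplit : vc + a * (κ * ε ^ 3) / (tc + b * (κ * ε ^ 2)) +
      tc / (tc + b * (κ * ε ^ 2)) * ε * R - vc - ε * U =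
      a * (κ * ε ^ 3) / (tc + b * (κ * ε ^ 2)) + (tc / (tc + b * (κ * ε ^ 2)) - 1) * ε * R +
        ε * (R - U) := by ring
  rw [hsplit]
  have r1 := abs_add_le (a * (κ * ε ^ 3) / (tc + b * (κ * ε ^ 2)) +
    (tc / (tc + b * (κ * ε ^ 2)) - 1) * ε * R) (ε * (R - U))
  have r2 := abs_add_le (a * (κ * ε ^ 3) / (tc + b * (κ * ε ^ 2)))
    ((tc / (tc + b * (κ * ε ^ 2)) - 1) * ε * R)
  rw [hC', add_mul, add_mul]
  linarith
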